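/- arXiv:1504.04853 — 3 statements merged into one kernel-verified Lean document; each statement's English description precedes it below -/
import Mathlib

section
/- Let R = ℚ[x,y,z], S = R[w_0,w_1,w_2], m = (x,y,z) ⊆ R, and J = (w_0 y − w_1 x, w_0 z² − w_2 x², w_1 z² − w_2 x y) ⊆ S. Then for all q ≥ 2 one has m^q S ∩ J = m^{q-2}(m² S ∩ J); moreover both sides equal m^{q-1}(w_0 y − w_1 x)S + m^{q-2}(w_0 z² − w_2 x², w_1 z² − w_2 x y)S. -/
open MvPolynomial

/-- total degree of a monomial in the variables `x, y, z` -/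
def arW (d : Fin 6 →₀ ℕ) : ℕ := d 0 + d 1 + d 2

lemma arW_add (d e : Fin 6 →₀ ℕ) : arW (d + e) = arW d + arW e := by
  simp only [arW, Finsupp.add_apply]; omega

/-- the ideal of polynomials all of whose monomials have weight at least `n` -/
def arHi (n : ℕ) : Ideal (MvPolynomial (Fin 6) ℚ) where
  carrier := {p | ∀ d ∈ p.support, n ≤ arW d}
  zero_mem' := by simp
  add_mem' := by
    intro a b ha hb d hd
    rcases Finset.mem_union.1 (support_add hd) with h | h
    · exact ha d h
    · exact hb d h
  smul_mem' := by
    intro c p hp d hd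
    rw [smul_eq_mul] at hd
    obtain ⟨e, _, f, hf, rfl⟩ := Finset.mem_add.1 (support_mul _ _ hd)
    have := hp f hf
    rw [arW_add]; omega

/-- the polynomials all of whose monomials have weight less than `n` -/
def arLo (n : ℕ) : AddSubmonoid (MvPolynomial (Fin 6) ℚ) where
  carrier := {p | ∀ d ∈ p.support, arW d < n}
  zero_mem' := by simp
  add_mem' := by
    intro a b ha hb d hd
    rcases Finset.mem_union.1 (support_add hd) with h | h
    · exact ha d h
    · exact hb d h

lemma arHi_mul (a b : ℕ) : arHi a * arHi b ≤ arHi (a + b) := by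
  rw [Ideal.mul_le]
  intro p hp r hr d hd
  obtain ⟨e, he, f, hf, rfl⟩ := Finset.mem_add.1 (support_mul _ _ hd)
  have h1 := hp e he
  have h2 := hr f hf
  rw [arW_add]; omega

lemma arX_mem (i : Fin 6) (hi : i = 0 ∨ i = 1 ∨ i = 2) :
    (X i : MvPolynomial (Fin 6) ℚ) ∈ arHi 1 := by
  intro d hd
  rw [support_X, Finset.mem_singleton] at hd
  subst hd
  rcases hi with rfl | rfl | rfl <;> simp [arW]

lemma ar_pow_le (n : ℕ) :
    (Ideal.span {X 0, X 1, X 2} : Ideal (MvPolynomial (Fin 6) ℚ)) ^ n ≤ arHi n := by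
  induction n with
  | zero => intro p _ d _; exact Nat.zero_le _
  | succ n ih =>
    rw [pow_succ]
    refine le_trans (Ideal.mul_mono ih ?_) (arHi_mul n 1)
    rw [Ideal.span_le]
    rintro p (rfl | rfl | rfl) <;> exact arX_mem _ (by simp)

lemma ar_split (n : ℕ) (p : MvPolynomial (Fin 6) ℚ) :
    ∃ b ∈ arLo n, ∃ c ∈ (Ideal.span {X 0, X 1, X 2} : Ideal (MvPolynomial (Fin 6) ℚ)) ^ n,
      p = b + c := by
  induction p using MvPolynomial.induction_on' with
  | monomial d r =>
    by_cases h : arW d < n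
    · refine ⟨monomial d r, ?_, 0, zero_mem _, by simp⟩
      intro e he
      have := Finset.mem_singleton.1 (support_monomial_subset he)
      rwa [this]
    · refine ⟨0, zero_mem _, monomial d r, ?_, by simp⟩
      refine Ideal.pow_le_pow_right (not_lt.1 h) ?_
      rw [monomial_eq, Finsupp.prod_fintype _ _ (by simp), Fin.prod_univ_six]
      have key : (X 0 ^ d 0 * X 1 ^ d 1 * X 2 ^ d 2 : MvPolynomial (Fin 6) ℚ) ∈
          (Ideal.span {X 0, X 1, X 2} : Ideal (MvPolynomial (Fin 6) ℚ)) ^ arW d := by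
        unfold arW
        rw [pow_add, pow_add]
        refine Ideal.mul_mem_mul (Ideal.mul_mem_mul ?_ ?_) ?_ <;>
          exact Ideal.pow_mem_pow (Ideal.subset_span (by simp)) _
      have := Ideal.mul_mem_left _ (C r * (X 3 ^ d 3 * X 4 ^ d 4 * X 5 ^ d 5)) key
      convert this using 1
      ring
  | add p r hp hr =>
    obtain ⟨b, hb, c, hc, rfl⟩ := hp
    obtain ⟨b', hb', c', hc', rfl⟩ := hr
    exact ⟨b + b', add_mem hb hb', c + c', add_mem hc hc', by ring⟩

lemma ar_zero (n : ℕ) (p : MvPolynomial (Fin 6) ℚ) (h1 : p ∈ arLo n) (h2 : p ∈ arHi n) :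
    p = 0 := by
  rw [← support_eq_empty, Finset.eq_empty_iff_forall_notMem]
  intro d hd
  have := h1 d hd
  have := h2 d hd
  omega

lemma arLo_mul (n k : ℕ) (p g : MvPolynomial (Fin 6) ℚ) (hp : p ∈ arLo n)
    (hg : g ∈ arLo (k + 1)) : p * g ∈ arLo (n + k) := by
  intro d hd
  obtain ⟨e, he, f, hf, rfl⟩ := Finset.mem_add.1 (support_mul _ _ hd)
  have h1 := hp e he
  have h2 := hg f hf
  rw [arW_add]; omega

lemma arLo_neg (n : ℕ) (p : MvPolynomial (Fin 6) ℚ) (hp : p ∈ arLo n) : -p ∈ arLo n := by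
  intro d hd
  rw [support_neg] at hd
  exact hp d hd

lemma arLo_X (i : Fin 6) : (X i : MvPolynomial (Fin 6) ℚ) ∈ arLo 2 := by
  intro d hd
  rw [support_X, Finset.mem_singleton] at hd
  subst hd
  fin_cases i <;> simp [arW]

lemma arLo_X' (i : Fin 6) (hi : i = 3 ∨ i = 4 ∨ i = 5) :
    (X i : MvPolynomial (Fin 6) ℚ) ∈ arLo 1 := by
  intro d hd
  rw [support_X, Finset.mem_singleton] at hd
  subst hd
  rcases hi with rfl | rfl | rfl <;> simp [arW]

lemma arLo_quad (i j k : Fin 6) (hi : i = 3 ∨ i = 4 ∨ i = 5) :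
    (X i * X j * X k : MvPolynomial (Fin 6) ℚ) ∈ arLo 3 :=
  arLo_mul 2 1 _ _ (arLo_mul 1 1 _ _ (arLo_X' i hi) (arLo_X j)) (arLo_X k)

set_option maxHeartbeats 1000000

/-- in `S = ℚ[x,y,z,w₀,w₁,w₂]` with `m S = (x,y,z)` and
`J = (w₀y − w₁x, w₀z² − w₂x², w₁z² − w₂xy)`, for all `q ≥ 2` one has
`mᵠS ∩ J = m^{q-2}(m²S ∩ J)`, and both sides equal
`m^{q-1}(w₀y − w₁x)S + m^{q-2}(w₀z² − w₂x², w₁z² − w₂xy)S`.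
Here `x = X 0, y = X 1, z = X 2, w₀ = X 3, w₁ = X 4, w₂ = X 5`. -/
theorem artinRees_ideal_example
    (x y z w₀ w₁ w₂ : MvPolynomial (Fin 6) ℚ)
    (hx : x = X 0) (hy : y = X 1) (hz : z = X 2)
    (hw₀ : w₀ = X 3) (hw₁ : w₁ = X 4) (hw₂ : w₂ = X 5)
    (mS J : Ideal (MvPolynomial (Fin 6) ℚ))
    (hmS : mS = Ideal.span {x, y, z})
    (hJ : J = Ideal.span {w₀ * y - w₁ * x, w₀ * z ^ 2 - w₂ * x ^ 2, w₁ * z ^ 2 - w₂ * x * y}) :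
    ∀ q : ℕ, 2 ≤ q →
      mS ^ q ⊓ J = mS ^ (q - 2) * (mS ^ 2 ⊓ J) ∧
      mS ^ q ⊓ J =
        mS ^ (q - 1) * Ideal.span {w₀ * y - w₁ * x} +
          mS ^ (q - 2) * Ideal.span {w₀ * z ^ 2 - w₂ * x ^ 2, w₁ * z ^ 2 - w₂ * x * y} := by
  subst hx hy hz hw₀ hw₁ hw₂ hmS hJ
  intro q hq
  obtain ⟨n, rfl⟩ := Nat.exists_eq_add_of_le' hq
  have e1 : n + 2 - 1 = n + 1 := by omega
  have e2 : n + 2 - 2 = n := by omega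
  rw [e1, e2]
  set M : Ideal (MvPolynomial (Fin 6) ℚ) := Ideal.span {X 0, X 1, X 2} with hM
  set g₁ : MvPolynomial (Fin 6) ℚ := X 3 * X 1 - X 4 * X 0 with hg₁
  set g₂ : MvPolynomial (Fin 6) ℚ := X 3 * X 2 ^ 2 - X 5 * X 0 ^ 2 with hg₂
  set g₃ : MvPolynomial (Fin 6) ℚ := X 4 * X 2 ^ 2 - X 5 * X 0 * X 1 with hg₃
  have l1 : g₁ ∈ arLo 2 := by
    rw [hg₁, sub_eq_add_neg]
    exact add_mem (arLo_mul 1 1 _ _ (arLo_X' 3 (by simp)) (arLo_X 1))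
      (arLo_neg _ _ (arLo_mul 1 1 _ _ (arLo_X' 4 (by simp)) (arLo_X 0)))
  have l2 : g₂ ∈ arLo 3 := by
    have : g₂ = X 3 * X 2 * X 2 + -(X 5 * X 0 * X 0) := by rw [hg₂]; ring
    rw [this]
    exact add_mem (arLo_quad _ _ _ (by simp)) (arLo_neg _ _ (arLo_quad _ _ _ (by simp)))
  have l3 : g₃ ∈ arLo 3 := by
    have : g₃ = X 4 * X 2 * X 2 + -(X 5 * X 0 * X 1) := by rw [hg₃]; ring
    rw [this]
    exact add_mem (arLo_quad _ _ _ (by simp)) (arLo_neg _ _ (arLo_quad _ _ _ (by simp)))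
  have x0 : (X 0 : MvPolynomial (Fin 6) ℚ) ∈ M := Ideal.subset_span (by simp)
  have x1 : (X 1 : MvPolynomial (Fin 6) ℚ) ∈ M := Ideal.subset_span (by simp)
  have x2 : (X 2 : MvPolynomial (Fin 6) ℚ) ∈ M := Ideal.subset_span (by simp)
  have m1 : g₁ ∈ M := sub_mem (Ideal.mul_mem_left _ _ x1) (Ideal.mul_mem_left _ _ x0)
  have m2 : g₂ ∈ M ^ 2 := sub_mem (Ideal.mul_mem_left _ _ (Ideal.pow_mem_pow x2 2))
    (Ideal.mul_mem_left _ _ (Ideal.pow_mem_pow x0 2))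
  have m3 : g₃ ∈ M ^ 2 := by
    refine sub_mem (Ideal.mul_mem_left _ _ (Ideal.pow_mem_pow x2 2)) ?_
    rw [mul_assoc, pow_two]
    exact Ideal.mul_mem_left _ _ (Ideal.mul_mem_mul x0 x1)
  clear_value g₁ g₂ g₃
  have j1 : g₁ ∈ Ideal.span {g₁, g₂, g₃} := Ideal.subset_span (by simp)
  have j2 : g₂ ∈ Ideal.span {g₁, g₂, g₃} := Ideal.subset_span (by simp)
  have j3 : g₃ ∈ Ideal.span {g₁, g₂, g₃} := Ideal.subset_span (by simp)
  have A : M ^ (n + 2) ⊓ Ideal.span {g₁, g₂, g₃} ≤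
      M ^ (n + 1) * Ideal.span {g₁} + M ^ n * Ideal.span {g₂, g₃} := by
    rintro f ⟨hf, hfJ⟩
    obtain ⟨a₁, a₂, a₃, rfl⟩ := Submodule.mem_span_triple.1 hfJ
    simp only [smul_eq_mul] at hf ⊢
    obtain ⟨b₁, hb₁, c₁, hc₁, rfl⟩ := ar_split (n + 1) a₁
    obtain ⟨b₂, hb₂, c₂, hc₂, rfl⟩ := ar_split n a₂
    obtain ⟨b₃, hb₃, c₃, hc₃, rfl⟩ := ar_split n a₃
    have k1 : c₁ * g₁ ∈ M ^ (n + 2) := by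
      have := Ideal.mul_mem_mul hc₁ m1
      rwa [← pow_succ] at this
    have k2 : c₂ * g₂ ∈ M ^ (n + 2) := by
      rw [pow_add]; exact Ideal.mul_mem_mul hc₂ m2
    have k3 : c₃ * g₃ ∈ M ^ (n + 2) := by
      rw [pow_add]; exact Ideal.mul_mem_mul hc₃ m3
    have hz : b₁ * g₁ + b₂ * g₂ + b₃ * g₃ = 0 := by
      apply ar_zero (n + 2)
      · exact add_mem (add_mem (arLo_mul (n + 1) 1 _ _ hb₁ l1) (arLo_mul n 2 _ _ hb₂ l2))
          (arLo_mul n 2 _ _ hb₃ l3)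
      · apply ar_pow_le
        have := sub_mem hf (add_mem (add_mem k1 k2) k3)
        convert this using 1
        ring
    have hs : (b₁ + c₁) * g₁ + ((b₂ + c₂) * g₂ + (b₃ + c₃) * g₃) =
        c₁ * g₁ + (c₂ * g₂ + c₃ * g₃) := by
      linear_combination hz
    have hs' : (b₁ + c₁) * g₁ + (b₂ + c₂) * g₂ + (b₃ + c₃) * g₃ =
        c₁ * g₁ + (c₂ * g₂ + c₃ * g₃) := by
      linear_combination hz
    first | rw [hs] | rw [hs']
    refine Submodule.add_mem_sup (Ideal.mul_mem_mul hc₁ (Ideal.subset_span (by simp)))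
      (add_mem (Ideal.mul_mem_mul hc₂ (Ideal.subset_span (by simp)))
        (Ideal.mul_mem_mul hc₃ (Ideal.subset_span (by simp))))
  have B : M ^ (n + 1) * Ideal.span {g₁} + M ^ n * Ideal.span {g₂, g₃} ≤
      M ^ n * (M ^ 2 ⊓ Ideal.span {g₁, g₂, g₃}) := by
    refine sup_le ?_ (Ideal.mul_mono le_rfl ?_)
    · rw [pow_succ, mul_assoc]
      refine Ideal.mul_mono le_rfl (le_inf ?_ ?_)
      · rw [pow_two]
        exact Ideal.mul_mono le_rfl ((Ideal.span_singleton_le_iff_mem _).2 m1)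
      · exact Ideal.mul_le_right.trans ((Ideal.span_singleton_le_iff_mem _).2 j1)
    · rw [Ideal.span_le]
      rintro p (rfl | rfl)
      · exact ⟨m2, j2⟩
      · exact ⟨m3, j3⟩
  have D : M ^ n * (M ^ 2 ⊓ Ideal.span {g₁, g₂, g₃}) ≤
      M ^ (n + 2) ⊓ Ideal.span {g₁, g₂, g₃} := by
    refine le_inf ?_ (Ideal.mul_le_right.trans inf_le_right)
    rw [pow_add]
    exact Ideal.mul_mono le_rfl inf_le_left
  exact ⟨le_antisymm (A.trans B) D, le_antisymm A (B.trans D)⟩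
end

section
/- Let R = ℚ[x,y,z], S = R[w_0,w_1,w_2], m = (x,y,z) ⊆ R, and let M_2 ⊆ G = S³ be the submodule generated by the two elements (w_2 x, −w_1, w_0) and (−z², y, −x). Then for all q ≥ 1 one has m^q G ∩ M_2 = m^{q-1}(m G ∩ M_2); moreover both sides equal m^q·(w_2 x, −w_1, w_0)·S + m^{q-1}·(−z², y, −x)·S. -/
open MvPolynomial

/-- Abbreviation for the polynomial ring in six variables. -/
abbrev SixRing := MvPolynomial (Fin 6) ℚ

/-- The ring map multiplying `x, y, z` by a new variable `t`. -/
noncomputable def scaleHom : SixRing →ₐ[ℚ] Polynomial SixRing :=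
  aeval ![Polynomial.monomial 1 (X 0), Polynomial.monomial 1 (X 1), Polynomial.monomial 1 (X 2),
    Polynomial.C (X 3), Polynomial.C (X 4), Polynomial.C (X 5)]

/-- The ideal `(x, y, z)`. -/
noncomputable def mIdeal : Ideal SixRing := Ideal.span {X 0, X 1, X 2}

lemma scaleHom_mem_rees (f : SixRing) : scaleHom f ∈ reesAlgebra mIdeal := by
  have h0 : (X 0 : SixRing) ∈ mIdeal := Ideal.subset_span (by simp)
  have h1 : (X 1 : SixRing) ∈ mIdeal := Ideal.subset_span (by simp)
  have h2 : (X 2 : SixRing) ∈ mIdeal := Ideal.subset_span (by simp)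
  induction f using MvPolynomial.induction_on with
  | C a =>
    have : scaleHom (C a) = algebraMap SixRing (Polynomial SixRing) (C a) := by
      simp only [scaleHom, aeval_C]
      rfl
    rw [this]
    exact Subalgebra.algebraMap_mem _ _
  | add p q hp hq => rw [map_add]; exact add_mem hp hq
  | mul_X p i hp =>
    rw [map_mul]
    refine mul_mem hp ?_
    fin_cases i
    · simpa [scaleHom] using reesAlgebra.monomial_mem.2 (by simpa using h0)
    · simpa [scaleHom] using reesAlgebra.monomial_mem.2 (by simpa using h1)
    · simpa [scaleHom] using reesAlgebra.monomial_mem.2 (by simpa using h2)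
    · simpa [scaleHom] using Subalgebra.algebraMap_mem (reesAlgebra mIdeal) (X 3)
    · simpa [scaleHom] using Subalgebra.algebraMap_mem (reesAlgebra mIdeal) (X 4)
    · simpa [scaleHom] using Subalgebra.algebraMap_mem (reesAlgebra mIdeal) (X 5)

lemma eval_scaleHom (f : SixRing) : (scaleHom f).eval 1 = f := by
  have : ((Polynomial.evalRingHom (1 : SixRing)).comp scaleHom.toRingHom) = RingHom.id _ := by
    apply MvPolynomial.ringHom_ext
    · intro a
      simp [scaleHom]
    · intro i
      fin_cases i <;> simp [scaleHom]
  exact RingHom.congr_fun this f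

lemma mem_pow_of_dvd (f : SixRing) (n : ℕ) (h : Polynomial.X ^ n ∣ scaleHom f) :
    f ∈ mIdeal ^ n := by
  rw [← eval_scaleHom f, Polynomial.eval_eq_sum_range]
  refine sum_mem fun k _ => ?_
  rw [one_pow, mul_one]
  by_cases hk : k < n
  · rw [Polynomial.X_pow_dvd_iff.1 h k hk]; exact zero_mem _
  · exact Ideal.pow_le_pow_right (not_lt.1 hk) (scaleHom_mem_rees f k)

lemma dvd_of_mem_pow (f : SixRing) (n : ℕ) (h : f ∈ mIdeal ^ n) :
    Polynomial.X ^ n ∣ scaleHom f := by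
  have hm : mIdeal ≤ (Ideal.span {(Polynomial.X : Polynomial SixRing)}).comap scaleHom := by
    rw [mIdeal, Ideal.span_le]
    intro g hg
    simp only [Set.mem_insert_iff, Set.mem_singleton_iff] at hg
    simp only [SetLike.mem_coe, Ideal.mem_comap, Ideal.mem_span_singleton]
    rcases hg with rfl | rfl | rfl <;>
      simp [scaleHom, ← Polynomial.C_mul_X_eq_monomial]
  have h2 := (Ideal.pow_right_mono hm n).trans (Ideal.le_comap_pow _ n) h
  rwa [Ideal.mem_comap, Ideal.span_singleton_pow, Ideal.mem_span_singleton] at h2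

lemma det_ne_zero : (X 1 * X 3 - X 0 * X 4 : SixRing) ≠ 0 := by
  intro h
  have := congrArg (eval ![0, 1, 0, 1, 0, 0]) h
  simp at this

lemma cancel_det (f : SixRing) (n : ℕ)
    (h : f * (X 1 * X 3 - X 0 * X 4) ∈ mIdeal ^ (n + 1)) : f ∈ mIdeal ^ n := by
  apply mem_pow_of_dvd
  have h1 := dvd_of_mem_pow _ _ h
  have h2 : scaleHom (f * (X 1 * X 3 - X 0 * X 4)) =
      (scaleHom f * Polynomial.C (X 1 * X 3 - X 0 * X 4)) * Polynomial.X := by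
    simp [scaleHom, ← Polynomial.C_mul_X_eq_monomial]
    ring
  rw [h2, pow_succ] at h1
  have h3 := (mul_dvd_mul_iff_right Polynomial.X_ne_zero).1 h1
  rw [Polynomial.X_pow_dvd_iff] at h3 ⊢
  intro d hd
  have h4 := h3 d hd
  rw [Polynomial.coeff_mul_C] at h4
  exact (mul_eq_zero.1 h4).resolve_right det_ne_zero

lemma apply_mem_of_mem_smul_top (I : Ideal SixRing) (g : Fin 3 → SixRing)
    (h : g ∈ I • (⊤ : Submodule SixRing (Fin 3 → SixRing))) (i : Fin 3) : g i ∈ I := by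
  induction h using Submodule.smul_induction_on' with
  | smul r hr n _ => exact Ideal.mul_mem_right _ _ hr
  | add a _ b _ ha hb => exact add_mem ha hb

lemma main_eq (n : ℕ) :
    mIdeal ^ (n + 1) • (⊤ : Submodule SixRing (Fin 3 → SixRing)) ⊓
      Submodule.span SixRing {![X 5 * X 0, -X 4, X 3], ![-X 2 ^ 2, X 1, -X 0]} =
    mIdeal ^ (n + 1) • Submodule.span SixRing {![X 5 * X 0, -X 4, X 3]} ⊔
      mIdeal ^ n • Submodule.span SixRing {![-X 2 ^ 2, X 1, -X 0]} := by
  have h0 : (X 0 : SixRing) ∈ mIdeal := Ideal.subset_span (by simp)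
  have h1 : (X 1 : SixRing) ∈ mIdeal := Ideal.subset_span (by simp)
  have h2 : (X 2 : SixRing) ∈ mIdeal := Ideal.subset_span (by simp)
  apply le_antisymm
  · rintro g ⟨hg, hM⟩
    obtain ⟨a, b, rfl⟩ := Submodule.mem_span_pair.1 hM
    have e1 := apply_mem_of_mem_smul_top _ _ hg 1
    have e2 := apply_mem_of_mem_smul_top _ _ hg 2
    simp at e1 e2
    have ha : a ∈ mIdeal ^ (n + 1) := by
      apply cancel_det
      have := add_mem (Ideal.mul_mem_mul e1 h0) (Ideal.mul_mem_mul e2 h1)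
      rw [← pow_succ] at this
      convert this using 1
      ring
    have hb : b ∈ mIdeal ^ n := by
      apply cancel_det
      have := add_mem (Ideal.mul_mem_right (X 3) _ e1) (Ideal.mul_mem_right (X 4) _ e2)
      convert this using 1
      ring
    exact Submodule.add_mem_sup
      (Submodule.smul_mem_smul ha (Submodule.mem_span_singleton_self _))
      (Submodule.smul_mem_smul hb (Submodule.mem_span_singleton_self _))
  · refine sup_le (le_inf (Submodule.smul_mono le_rfl le_top) ?_) (le_inf ?_ ?_)
    · exact Submodule.smul_le_right.trans (Submodule.span_mono (by simp))
    · rw [pow_succ mIdeal n, Submodule.mul_smul]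
      refine Submodule.smul_mono le_rfl ?_
      rw [Submodule.span_singleton_le_iff_mem]
      have hv : (![-X 2 ^ 2, X 1, -X 0] : Fin 3 → SixRing) =
          (X 2 : SixRing) • ![-X 2, 0, 0] + (X 1 : SixRing) • ![0, 1, 0] +
            (X 0 : SixRing) • ![0, 0, -1] := by
        ext i : 1
        fin_cases i <;> simp
        ring
      rw [hv]
      exact add_mem (add_mem (Submodule.smul_mem_smul h2 trivial)
        (Submodule.smul_mem_smul h1 trivial)) (Submodule.smul_mem_smul h0 trivial)
    · exact Submodule.smul_le_right.trans (Submodule.span_mono (by simp))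

/-- in `S = ℚ[x,y,z,w₀,w₁,w₂]` with `m = (x,y,z)`, `G = S³` and
`M₂ ⊆ G` the submodule generated by `(w₂x, −w₁, w₀)` and `(−z², y, −x)`, for all `q ≥ 1`
one has `mᵠG ∩ M₂ = m^{q-1}(mG ∩ M₂)`, and both sides equal
`mᵠ·(w₂x, −w₁, w₀)·S + m^{q-1}·(−z², y, −x)·S`. -/
theorem artinRees_syzygy_example
    (x y z w₀ w₁ w₂ : MvPolynomial (Fin 6) ℚ)
    (hx : x = X 0) (hy : y = X 1) (hz : z = X 2)
    (hw₀ : w₀ = X 3) (hw₁ : w₁ = X 4) (hw₂ : w₂ = X 5)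
    (mS : Ideal (MvPolynomial (Fin 6) ℚ))
    (hmS : mS = Ideal.span {x, y, z})
    (M₂ : Submodule (MvPolynomial (Fin 6) ℚ) (Fin 3 → MvPolynomial (Fin 6) ℚ))
    (hM₂ : M₂ = Submodule.span (MvPolynomial (Fin 6) ℚ)
      {![w₂ * x, -w₁, w₀], ![-z ^ 2, y, -x]}) :
    ∀ q : ℕ, 1 ≤ q →
      mS ^ q • (⊤ : Submodule (MvPolynomial (Fin 6) ℚ) (Fin 3 → MvPolynomial (Fin 6) ℚ)) ⊓ M₂ =
        mS ^ (q - 1) •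
          (mS • (⊤ : Submodule (MvPolynomial (Fin 6) ℚ) (Fin 3 → MvPolynomial (Fin 6) ℚ)) ⊓ M₂) ∧
      mS ^ q • (⊤ : Submodule (MvPolynomial (Fin 6) ℚ) (Fin 3 → MvPolynomial (Fin 6) ℚ)) ⊓ M₂ =
        mS ^ q • Submodule.span (MvPolynomial (Fin 6) ℚ) {![w₂ * x, -w₁, w₀]} +
          mS ^ (q - 1) • Submodule.span (MvPolynomial (Fin 6) ℚ) {![-z ^ 2, y, -x]} := by
  subst hx hy hz hw₀ hw₁ hw₂ hmS hM₂
  intro q hq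
  obtain ⟨n, rfl⟩ : ∃ n, q = n + 1 := ⟨q - 1, by omega⟩
  have hn := main_eq n
  have h0 := main_eq 0
  simp only [mIdeal] at hn h0
  rw [zero_add, pow_one, pow_zero, one_smul] at h0
  rw [Nat.add_sub_cancel]
  refine ⟨?_, hn⟩
  rw [hn, h0, Submodule.smul_sup, pow_succ, Submodule.mul_smul]
end

section
/- Let R = ℚ[x,y,z] and I = (x², xy, z²) ⊆ R. Then the Rees algebra Rees(I) = R ⊕ I ⊕ I² ⊕ ... (graded with deg I^n = n) is isomorphic as a graded R-algebra to S/(w_0 y − w_1 x, w_0 z² − w_2 x², w_1 z² − w_2 x y), where S = R[w_0,w_1,w_2] with deg w_i = 1, via the surjection sending w_0 ↦ x², w_1 ↦ xy, w_2 ↦ z². -/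
open MvPolynomial


/-- Normal form of the monomial of multidegree `(A, B, D, T)`. -/
def nfm {Q : Type*} [CommRing Q] (x y z u v w : Q) (A B D T : ℕ) : Q :=
  if 2 * T ≤ D then x ^ A * y ^ B * z ^ (D - 2 * T) * w ^ T
  else if T - D / 2 ≤ B then
    x ^ (A - (T - D / 2)) * y ^ (B - (T - D / 2)) * z ^ (D % 2) * v ^ (T - D / 2) * w ^ (D / 2)
  else x ^ (A - 2 * (T - D / 2 - B) - B) * z ^ (D % 2) * u ^ (T - D / 2 - B) * v ^ B * w ^ (D / 2)

theorem nfm_eq {Q : Type*} [CommRing Q] (x y z u v w : Q) (h1 : y * u = x * v)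
    (h2 : z ^ 2 * u = x ^ 2 * w) (h3 : z ^ 2 * v = x * y * w) :
    ∀ n a b c i j k : ℕ, 2 * i + j = n → x ^ a * y ^ b * z ^ c * u ^ i * v ^ j * w ^ k =
      nfm x y z u v w (a + 2 * i + j) (b + j) (c + 2 * k) (i + j + k) := by
  intro n
  induction n using Nat.strong_induction_on with
  | _ n ih =>
  intro a b c i j k hn
  by_cases c1 : 1 ≤ i ∧ 1 ≤ b
  · obtain ⟨⟨i, rfl⟩, ⟨b, rfl⟩⟩ := And.imp Nat.exists_eq_add_of_le Nat.exists_eq_add_of_le c1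
    have := ih (2 * i + (j + 1)) (by omega) (a + 1) b c i (j + 1) k rfl
    calc _ = x ^ (a + 1) * y ^ b * z ^ c * u ^ i * v ^ (j + 1) * w ^ k := by
          linear_combination x ^ a * y ^ b * z ^ c * u ^ i * v ^ j * w ^ k * h1
      _ = _ := by rw [this]; congr 1 <;> omega
  by_cases c2 : 1 ≤ i ∧ 2 ≤ c
  · obtain ⟨⟨i, rfl⟩, ⟨c, rfl⟩⟩ := And.imp Nat.exists_eq_add_of_le Nat.exists_eq_add_of_le c2
    have := ih (2 * i + j) (by omega) (a + 2) b c i j (k + 1) rfl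
    calc _ = x ^ (a + 2) * y ^ b * z ^ c * u ^ i * v ^ j * w ^ (k + 1) := by
          linear_combination x ^ a * y ^ b * z ^ c * u ^ i * v ^ j * w ^ k * h2
      _ = _ := by rw [this]; congr 1 <;> omega
  by_cases c3 : 1 ≤ j ∧ 2 ≤ c
  · obtain ⟨⟨j, rfl⟩, ⟨c, rfl⟩⟩ := And.imp Nat.exists_eq_add_of_le Nat.exists_eq_add_of_le c3
    have := ih (2 * i + j) (by omega) (a + 1) (b + 1) c i j (k + 1) rfl
    calc _ = x ^ (a + 1) * y ^ (b + 1) * z ^ c * u ^ i * v ^ j * w ^ (k + 1) := by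
          linear_combination x ^ a * y ^ b * z ^ c * u ^ i * v ^ j * w ^ k * h3
      _ = _ := by rw [this]; congr 1 <;> omega
  unfold nfm
  split_ifs with d1 d2
  · obtain rfl : i = 0 := by omega
    obtain rfl : j = 0 := by omega
    have : c + 2 * k - 2 * (0 + 0 + k) = c := by omega
    rw [this]; simp
  · have e1 : (c + 2 * k) / 2 = k := by omega
    have e2 : (c + 2 * k) % 2 = c := by omega
    rw [e1] at d2
    have hib : i = 0 := by omega
    subst hib
    have e3 : 0 + j + k - k = j := by omega
    have e4 : a + 2 * 0 + j - j = a := by omega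
    have e5 : b + j - j = b := by omega
    rw [e1, e2, e3, e4, e5]; ring
  · have e1 : (c + 2 * k) / 2 = k := by omega
    have e2 : (c + 2 * k) % 2 = c := by omega
    rw [e1] at d2
    obtain rfl : b = 0 := by omega
    have e3 : i + j + k - k - (0 + j) = i := by omega
    have e4 : a + 2 * i + j - 2 * i - (0 + j) = a := by omega
    rw [e1, e2, e3, e4]; ring

theorem fin3_monomial (S : Type*) [CommRing S] (d : Fin 3 →₀ ℕ) (r : S) :
    monomial d r = C r * (X 0 ^ d 0 * X 1 ^ d 1 * X 2 ^ d 2) := by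
  rw [monomial_eq, Finsupp.prod_fintype _ _ (by simp), Fin.prod_univ_three]

/-- The `ℚ`-linear section. -/
noncomputable def secMap {Q : Type*} [CommRing Q] [Algebra ℚ Q] (x y z u v w : Q) :
    Polynomial (MvPolynomial (Fin 3) ℚ) →ₗ[ℚ] Q :=
  Polynomial.lsum fun T => (basisMonomials (Fin 3) ℚ).constr ℚ
    fun m => nfm x y z u v w (m 0) (m 1) (m 2) T

theorem secMap_apply {Q : Type*} [CommRing Q] [Algebra ℚ Q] (x y z u v w : Q) (A B D T : ℕ) :
    secMap x y z u v w (Polynomial.monomial T (X 0 ^ A * X 1 ^ B * X 2 ^ D)) =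
      nfm x y z u v w A B D T := by
  have h : (X 0 ^ A * X 1 ^ B * X 2 ^ D : MvPolynomial (Fin 3) ℚ) =
      basisMonomials (Fin 3) ℚ (Finsupp.equivFunOnFinite.symm ![A, B, D]) := by
    rw [coe_basisMonomials]
    beta_reduce
    rw [fin3_monomial]
    simp
  rw [secMap, Polynomial.lsum_apply, Polynomial.sum_monomial_index _ _ (by simp), h,
    Module.Basis.constr_basis]
  simp

/-- for `R = ℚ[x,y,z]` and `I = (x², xy, z²)`, the Rees algebra of `I`
is isomorphic, as a graded `R`-algebra, to `S/(w₀y − w₁x, w₀z² − w₂x², w₁z² − w₂xy)`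
where `S = R[w₀,w₁,w₂]` (with `deg wᵢ = 1`), via `w₀ ↦ x²t, w₁ ↦ xyt, w₂ ↦ z²t`:
the surjection `ψ : S → R[t]` has image the Rees algebra, kernel `J`, and sends the
degree-`n` homogeneous component of `S` into `Iⁿ·tⁿ`. -/
theorem reesAlgebra_presentation_example
    (x y z : MvPolynomial (Fin 3) ℚ) (hx : x = X 0) (hy : y = X 1) (hz : z = X 2)
    (I : Ideal (MvPolynomial (Fin 3) ℚ))
    (hI : I = Ideal.span {x ^ 2, x * y, z ^ 2})
    (J : Ideal (MvPolynomial (Fin 3) (MvPolynomial (Fin 3) ℚ)))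
    (hJ : J = Ideal.span
      {C y * X 0 - C x * X 1,
       C (z ^ 2) * X 0 - C (x ^ 2) * X 2,
       C (z ^ 2) * X 1 - C (x * y) * X 2})
    (ψ : MvPolynomial (Fin 3) (MvPolynomial (Fin 3) ℚ) →ₐ[MvPolynomial (Fin 3) ℚ]
      Polynomial (MvPolynomial (Fin 3) ℚ))
    (hψ : ψ = aeval ![Polynomial.C (x ^ 2) * Polynomial.X,
      Polynomial.C (x * y) * Polynomial.X, Polynomial.C (z ^ 2) * Polynomial.X]) :
    RingHom.ker (ψ : MvPolynomial (Fin 3) (MvPolynomial (Fin 3) ℚ) →+*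
        Polynomial (MvPolynomial (Fin 3) ℚ)) = J ∧
    ψ.range = reesAlgebra I ∧
    (∀ (n : ℕ) (f : MvPolynomial (Fin 3) (MvPolynomial (Fin 3) ℚ)),
      f ∈ homogeneousSubmodule (Fin 3) (MvPolynomial (Fin 3) ℚ) n →
        ψ f ∈ Submodule.map (Polynomial.monomial n) (I ^ n)) ∧
    Nonempty ((MvPolynomial (Fin 3) (MvPolynomial (Fin 3) ℚ) ⧸ J)
      ≃ₐ[MvPolynomial (Fin 3) ℚ] reesAlgebra I) := by
  have ψ0 : ψ (X 0) = Polynomial.C (x ^ 2) * Polynomial.X := by simp [hψ]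
  have ψ1 : ψ (X 1) = Polynomial.C (x * y) * Polynomial.X := by simp [hψ]
  have ψ2 : ψ (X 2) = Polynomial.C (z ^ 2) * Polynomial.X := by simp [hψ]
  have ψC : ∀ r, ψ (C r) = Polynomial.C r := fun r => ψ.commutes r
  have ψm : ∀ (d : Fin 3 →₀ ℕ) r, ψ (monomial d r) = Polynomial.monomial (d 0 + d 1 + d 2)
      (r * ((x ^ 2) ^ d 0 * (x * y) ^ d 1 * (z ^ 2) ^ d 2)) := by
    intro d r
    rw [fin3_monomial, ← Polynomial.C_mul_X_pow_eq_monomial]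
    simp only [map_mul, map_pow, ψ0, ψ1, ψ2, ψC]
    ring
  have memI : x ^ 2 ∈ I ∧ x * y ∈ I ∧ z ^ 2 ∈ I := by
    subst hI
    refine ⟨?_, ?_, ?_⟩ <;> exact Ideal.subset_span (by simp)
  have hker : RingHom.ker (ψ : MvPolynomial (Fin 3) (MvPolynomial (Fin 3) ℚ) →+*
        Polynomial (MvPolynomial (Fin 3) ℚ)) = J := by
    apply le_antisymm
    · let q := Ideal.Quotient.mkₐ ℚ J
      have hJ0 : ∀ f g, f - g ∈ J → q f = q g := fun f g h => Ideal.Quotient.eq.2 h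
      have h1 : q (C y) * q (X 0) = q (C x) * q (X 1) := by
        rw [← map_mul, ← map_mul]
        exact hJ0 _ _ (hJ ▸ Ideal.subset_span (by simp))
      have h2 : q (C z) ^ 2 * q (X 0) = q (C x) ^ 2 * q (X 2) := by
        simp only [← map_mul, ← map_pow]
        exact hJ0 _ _ (hJ ▸ Ideal.subset_span (by simp))
      have h3 : q (C z) ^ 2 * q (X 1) = q (C x) * q (C y) * q (X 2) := by
        simp only [← map_mul, ← map_pow]
        exact hJ0 _ _ (hJ ▸ Ideal.subset_span (by simp))
      have nf := nfm_eq (q (C x)) (q (C y)) (q (C z)) (q (X 0)) (q (X 1)) (q (X 2)) h1 h2 h3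
      let σ := secMap (q (C x)) (q (C y)) (q (C z)) (q (X 0)) (q (X 1)) (q (X 2))
      have key : ∀ f, σ (ψ f) = q f := by
        intro f
        rw [f.as_sum, map_sum, map_sum, map_sum]
        refine Finset.sum_congr rfl fun d _ => ?_
        generalize coeff d f = r
        rw [r.as_sum, map_sum, map_sum, map_sum, map_sum]
        refine Finset.sum_congr rfl fun m _ => ?_
        generalize coeff m r = a
        have e : (monomial d (monomial m a) : MvPolynomial (Fin 3) (MvPolynomial (Fin 3) ℚ)) =
            a • monomial d (monomial m 1) := by
          rw [smul_monomial, smul_monomial, smul_eq_mul, mul_one]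
        have ψa : ∀ g, ψ (a • g) = a • ψ g := fun g => map_smul (ψ.restrictScalars ℚ) a g
        rw [e, ψa, map_smul, map_smul, ψm]
        congr 1
        have e2 : (monomial m 1 : MvPolynomial (Fin 3) ℚ) *
            ((x ^ 2) ^ d 0 * (x * y) ^ d 1 * (z ^ 2) ^ d 2) =
            X 0 ^ (m 0 + 2 * d 0 + d 1) * X 1 ^ (m 1 + d 1) * X 2 ^ (m 2 + 2 * d 2) := by
          rw [fin3_monomial, hx, hy, hz, C_1]; ring
        rw [e2, secMap_apply, ← nf _ _ _ _ _ _ _ rfl, fin3_monomial, fin3_monomial, C_1, hx, hy, hz]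
        simp only [map_mul, map_pow, map_one]
        ring
      intro f hf
      have hf' : ψ f = 0 := hf
      have := key f
      rw [hf', map_zero] at this
      exact Ideal.Quotient.eq_zero_iff_mem.1 this.symm
    · rw [hJ, Ideal.span_le]
      rintro f (rfl | rfl | rfl) <;>
      · change ψ _ = 0
        simp only [map_sub, map_mul, map_pow, ψ0, ψ1, ψ2, ψC]
        ring
  have hrange : ψ.range = reesAlgebra I := by
    rw [← adjoin_monomial_eq_reesAlgebra]
    apply le_antisymm
    · rw [hψ, ← Algebra.adjoin_range_eq_range_aeval]
      apply Algebra.adjoin_mono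
      rintro _ ⟨i, rfl⟩
      obtain ⟨m0, m1, m2⟩ := memI
      fin_cases i
      · exact ⟨_, m0, by simp [← Polynomial.C_mul_X_eq_monomial]⟩
      · exact ⟨_, m1, by simp [← Polynomial.C_mul_X_eq_monomial]⟩
      · exact ⟨_, m2, by simp [← Polynomial.C_mul_X_eq_monomial]⟩
    · rw [Algebra.adjoin_le_iff]
      change Submodule.map (Polynomial.monomial 1) I ≤ Subalgebra.toSubmodule ψ.range
      rw [Submodule.map_le_iff_le_comap, hI]
      apply Submodule.span_le.2
      rintro f (rfl | rfl | rfl)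
      · exact ⟨X 0, by simp [ψ0, ← Polynomial.C_mul_X_eq_monomial]⟩
      · exact ⟨X 1, by simp [ψ1, ← Polynomial.C_mul_X_eq_monomial]⟩
      · exact ⟨X 2, by simp [ψ2, ← Polynomial.C_mul_X_eq_monomial]⟩
  refine ⟨hker, hrange, ?_, ?_⟩
  · intro n f hf
    rw [f.as_sum, map_sum]
    refine Submodule.sum_mem _ fun d hd => ?_
    have hdeg : d 0 + d 1 + d 2 = n := by
      have := (mem_homogeneousSubmodule n f).1 hf (mem_support_iff.1 hd)
      rw [← this, Finsupp.weight_apply, Finsupp.sum_fintype _ _ (by simp), Fin.sum_univ_three]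
      simp
    rw [ψm, hdeg]
    refine ⟨_, ?_, rfl⟩
    rw [← hdeg, pow_add, pow_add]
    apply Ideal.mul_mem_left
    exact Ideal.mul_mem_mul (Ideal.mul_mem_mul (Ideal.pow_mem_pow memI.1 _)
      (Ideal.pow_mem_pow memI.2.1 _)) (Ideal.pow_mem_pow memI.2.2 _)
  · have hk : J = RingHom.ker ψ := hker.symm
    exact ⟨(Ideal.quotientEquivAlgOfEq _ hk).trans ((Ideal.quotientKerEquivRange ψ).trans
      (Subalgebra.equivOfEq _ _ hrange))⟩
end
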